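/- arXiv:2506.17042 — 5 statements merged into one kernel-verified Lean document; each statement's English description precedes it below -/
import Mathlib

section
/- Let c > 0, γ > 0 and β = (β_1, …, β_r) ∈ ℕ^r, and set |β| = β_1 + ⋯ + β_r. There exist constants 0 < A ≤ B and N ∈ ℕ, depending only on r, c, γ, β, such that for all integers n ≥ N and all x ∈ ℝ^r: A · n^{(r+|β|)/2} ≤ Σ_{m ∈ ℤ^r, ‖m − n x‖ ≤ n^{1/2+γ}} ( Π_{j=1}^r |m_j − n x_j|^{β_j} ) · exp(−c ‖m − n x‖² / n) ≤ B · n^{(r+|β|)/2}, where ‖·‖ denotes the Euclidean norm on ℝ^r. (This is Lemma 2.4, equation (2.6), of the paper, expressed in lattice coordinates; the two-sided bound is uniform in the center x.) -/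
lemma aux_pow_exp (c : ℝ) (hc : 0 < c) (m : ℕ) (v : ℝ) (hv : 0 ≤ v) :
    v ^ m * Real.exp (-(c * v)) ≤ m.factorial / c ^ m := by
  have h := Real.pow_div_factorial_le_exp (c * v) (by positivity) m
  have hf : (0:ℝ) < m.factorial := by positivity
  rw [Real.exp_neg, ← div_eq_mul_inv, div_le_div_iff₀ (Real.exp_pos _) (by positivity)]
  rw [div_le_iff₀ hf, mul_pow] at h
  nlinarith

lemma aux_K (c : ℝ) (hc : 0 < c) (b : ℕ) :
    ∃ K : ℝ, 0 < K ∧ ∀ u : ℝ, |u| ^ b * Real.exp (-(c * u ^ 2)) ≤ K / (1 + u ^ 2) := by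
  refine ⟨(Nat.factorial 0 : ℝ) / c ^ 0 + Nat.factorial 1 / c ^ 1 + Nat.factorial b / c ^ b
    + Nat.factorial (b+1) / c ^ (b+1), by positivity, fun u => ?_⟩
  have h0 := aux_pow_exp c hc 0 (u^2) (by positivity)
  have h1 := aux_pow_exp c hc 1 (u^2) (by positivity)
  have h2 := aux_pow_exp c hc b (u^2) (by positivity)
  have h3 := aux_pow_exp c hc (b+1) (u^2) (by positivity)
  rw [le_div_iff₀ (by positivity)]
  have hE := Real.exp_pos (-(c * u^2))
  have hb : |u| ^ b ≤ 1 + (u^2)^b := by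
    have : (u^2)^b = (|u|^b)^2 := by rw [← sq_abs u]; ring
    rw [this]
    nlinarith [sq_nonneg (|u|^b - 1)]
  calc |u| ^ b * Real.exp (-(c * u ^ 2)) * (1 + u^2)
      ≤ (1 + (u^2)^b) * Real.exp (-(c * u ^ 2)) * (1 + u^2) := by gcongr
    _ = (u^2)^0 * Real.exp (-(c * u ^ 2)) + (u^2)^1 * Real.exp (-(c * u ^ 2))
        + (u^2)^b * Real.exp (-(c * u ^ 2)) + (u^2)^(b+1) * Real.exp (-(c * u ^ 2)) := by ring
    _ ≤ _ := by linarith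

lemma aux_summable : Summable (fun q : ℤ => 1 / (1 + (q:ℝ) ^ 2)) := by
  have h2 : Summable (fun q : ℤ => 1 / (q:ℝ) ^ 2) := Real.summable_one_div_int_pow.mpr (by norm_num)
  refine Summable.of_norm_bounded_eventually h2 ?_
  have : ∀ᶠ q : ℤ in Filter.cofinite, q ≠ 0 := by
    simpa using (Set.finite_singleton (0:ℤ)).compl_mem_cofinite
  filter_upwards [this] with q hq
  have hq' : (0:ℝ) < (q:ℝ)^2 := by positivity
  rw [Real.norm_of_nonneg (by positivity)]
  exact one_div_le_one_div_of_le hq' (by linarith)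

lemma aux_upper (c : ℝ) (hc : 0 < c) (b : ℕ) :
    ∃ B : ℝ, 0 < B ∧ ∀ s : ℝ, 1 ≤ s → ∀ y : ℝ, ∀ S : Finset ℤ,
      ∑ k ∈ S, |(k:ℝ) - y| ^ b * Real.exp (-(c * (((k:ℝ) - y) / s) ^ 2)) ≤ B * s ^ (b+1) := by
  obtain ⟨K, hK, hKu⟩ := aux_K c hc b
  set T := ∑' q : ℤ, 1 / (1 + (q:ℝ) ^ 2) with hT
  have hT0 : 0 ≤ T := tsum_nonneg fun q => by positivity
  refine ⟨6 * K * (T + 1), by positivity, fun s hs y S => ?_⟩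
  have hs0 : 0 < s := by linarith
  let φ : ℤ → ℤ := fun k => ⌊((k:ℝ) - y) / s⌋
  have hpt : ∀ k : ℤ, |(k:ℝ) - y| ^ b * Real.exp (-(c * (((k:ℝ) - y) / s) ^ 2))
      ≤ s ^ b * (3 * K) * (1 / (1 + (φ k : ℝ)^2)) := by
    intro k
    have h := hKu (((k:ℝ) - y) / s)
    have e : |(k:ℝ) - y| = s * |((k:ℝ) - y) / s| := by
      rw [abs_div, abs_of_pos hs0]; field_simp
    rw [e, mul_pow, mul_assoc, mul_assoc (s^b)]
    refine mul_le_mul_of_nonneg_left (h.trans ?_) (by positivity)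
    have f1 : (φ k : ℝ) ≤ ((k:ℝ) - y) / s := Int.floor_le _
    have f2 : ((k:ℝ) - y) / s < (φ k : ℝ) + 1 := Int.lt_floor_add_one _
    generalize ((k:ℝ) - y) / s = u at *
    generalize (φ k : ℝ) = q at *
    rw [mul_one_div, div_le_div_iff₀ (by positivity) (by positivity)]
    have : 1 + q^2 ≤ 3 * (1 + u^2) := by nlinarith [sq_nonneg (u - (u - q)), sq_nonneg (u + (u - q)), mul_nonneg (sub_nonneg.2 f1) (sub_nonneg.2 f2.le)]
    nlinarith
  have hcard : ∀ q : ℤ, ((S.filter (fun k => φ k = q)).card : ℝ) ≤ 2 * s := by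
    intro q
    have hsub : S.filter (fun k => φ k = q) ⊆ Finset.Ico ⌈y + q * s⌉ ⌈y + (q+1) * s⌉ := by
      intro k hk
      have hk2 : φ k = q := (Finset.mem_filter.1 hk).2
      have := Int.floor_eq_iff.1 hk2
      rw [le_div_iff₀ hs0, div_lt_iff₀ hs0] at this
      rw [Finset.mem_Ico, Int.ceil_le, Int.lt_ceil]
      constructor <;> linarith
    have h1 := Finset.card_le_card hsub
    have h2 : ((Finset.Ico ⌈y + q * s⌉ ⌈y + (q+1) * s⌉).card : ℝ) ≤ 2 * s := by
      rw [Int.card_Ico]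
      have hle : ⌈y + q * s⌉ ≤ ⌈y + (q+1) * s⌉ := Int.ceil_mono (by linarith)
      have : (((⌈y + (q+1) * s⌉ - ⌈y + q * s⌉).toNat : ℤ) : ℝ) = ⌈y + (q+1) * s⌉ - ⌈y + q * s⌉ := by
        rw [Int.toNat_of_nonneg (by linarith)]; push_cast; ring
      have h3 := Int.ceil_lt_add_one (y + (q+1) * s)
      have h4 := Int.le_ceil (y + q * s)
      rw [Int.cast_natCast] at this
      rw [this]; linarith
    exact le_trans (by exact_mod_cast h1) h2
  calc _ ≤ ∑ k ∈ S, s ^ b * (3 * K) * (1 / (1 + (φ k : ℝ)^2)) := Finset.sum_le_sum fun k _ => hpt k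
    _ = s ^ b * (3 * K) * ∑ k ∈ S, (1 / (1 + (φ k : ℝ)^2)) := by rw [Finset.mul_sum]
    _ = s ^ b * (3 * K) * ∑ q ∈ S.image φ, (S.filter (fun k => φ k = q)).card • (1 / (1 + (q : ℝ)^2)) := by
        rw [Finset.sum_comp (fun q : ℤ => 1 / (1 + (q : ℝ)^2)) φ]
    _ ≤ s ^ b * (3 * K) * ∑ q ∈ S.image φ, (2 * s) * (1 / (1 + (q : ℝ)^2)) := by
        gcongr with q hq
        rw [nsmul_eq_mul]
        exact mul_le_mul_of_nonneg_right (hcard q) (by positivity)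
    _ = s ^ b * (3 * K) * (2 * s) * ∑ q ∈ S.image φ, (1 / (1 + (q : ℝ)^2)) := by
        rw [← Finset.mul_sum]; ring
    _ ≤ s ^ b * (3 * K) * (2 * s) * (T + 1) := by
        gcongr
        have := aux_summable.sum_le_tsum (S.image φ) (fun q _ => by positivity)
        linarith
    _ = _ := by ring

lemma aux_lower (c : ℝ) (hc : 0 < c) (b : ℕ) (s : ℝ) (hs : 2 ≤ s) (y : ℝ) :
    (Real.exp (-(4 * c)) / 2) * s ^ (b+1) ≤
      ∑ k ∈ Finset.Ico ⌈y + s⌉ ⌈y + 2 * s⌉,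
        |(k:ℝ) - y| ^ b * Real.exp (-(c * (((k:ℝ) - y) / s) ^ 2)) := by
  have hs0 : 0 < s := by linarith
  have hcard : s / 2 ≤ ((Finset.Ico ⌈y + s⌉ ⌈y + 2 * s⌉).card : ℝ) := by
    rw [Int.card_Ico]
    have hle : ⌈y + s⌉ ≤ ⌈y + 2 * s⌉ := Int.ceil_mono (by linarith)
    have : (((⌈y + 2 * s⌉ - ⌈y + s⌉).toNat : ℤ) : ℝ) = ⌈y + 2 * s⌉ - ⌈y + s⌉ := by
      rw [Int.toNat_of_nonneg (by linarith)]; push_cast; ring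
    have h3 := Int.ceil_lt_add_one (y + s)
    have h4 := Int.le_ceil (y + 2 * s)
    rw [Int.cast_natCast] at this
    rw [this]; linarith
  have hpt : ∀ k ∈ Finset.Ico ⌈y + s⌉ ⌈y + 2 * s⌉, s ^ b * Real.exp (-(4 * c)) ≤
      |(k:ℝ) - y| ^ b * Real.exp (-(c * (((k:ℝ) - y) / s) ^ 2)) := by
    intro k hk
    rw [Finset.mem_Ico, Int.ceil_le, Int.lt_ceil] at hk
    have h1 : s ≤ |(k:ℝ) - y| := le_trans (by linarith) (le_abs_self _)
    have h2 : ((k:ℝ) - y) / s ≤ 2 := by rw [div_le_iff₀ hs0]; linarith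
    have h3 : 0 ≤ ((k:ℝ) - y) / s := div_nonneg (by linarith) hs0.le
    have h4 : (((k:ℝ) - y) / s) ^ 2 ≤ 4 := by nlinarith
    have h5 : -(4 * c) ≤ -(c * (((k:ℝ) - y) / s) ^ 2) := by nlinarith
    gcongr
  have := Finset.card_nsmul_le_sum _ _ _ hpt
  refine le_trans ?_ this
  rw [nsmul_eq_mul]
  calc _ = (s / 2) * (s ^ b * Real.exp (-(4 * c))) := by ring
    _ ≤ _ := by gcongr


/-- Lemma 2.4, equation (2.6): two-sided bound, uniform in the center `x ∈ ℝ^r`,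
for the Gaussian-polynomial lattice sum over the window `‖m − n x‖ ≤ n^{1/2+γ}`:
it is comparable to `n^{(r+|β|)/2}`. -/
theorem stmt_4 (r : ℕ) (c γ : ℝ) (hc : 0 < c) (hγ : 0 < γ) (β : Fin r → ℕ) :
    ∃ A B : ℝ, ∃ N : ℕ, 0 < A ∧ A ≤ B ∧
      ∀ n : ℕ, N ≤ n → ∀ x : Fin r → ℝ,
        A * (n : ℝ) ^ (((r : ℝ) + ∑ j, (β j : ℝ)) / 2) ≤
            (∑' m : Fin r → ℤ,
              Set.indicator
                {m : Fin r → ℤ |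
                  Real.sqrt (∑ j, ((m j : ℝ) - n * x j) ^ 2) ≤ (n : ℝ) ^ ((1 : ℝ) / 2 + γ)}
                (fun m => (∏ j, |(m j : ℝ) - n * x j| ^ β j) *
                  Real.exp (-c * (∑ j, ((m j : ℝ) - n * x j) ^ 2) / n)) m) ∧
          (∑' m : Fin r → ℤ,
              Set.indicator
                {m : Fin r → ℤ |
                  Real.sqrt (∑ j, ((m j : ℝ) - n * x j) ^ 2) ≤ (n : ℝ) ^ ((1 : ℝ) / 2 + γ)}
                (fun m => (∏ j, |(m j : ℝ) - n * x j| ^ β j) *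
                  Real.exp (-c * (∑ j, ((m j : ℝ) - n * x j) ^ 2) / n)) m) ≤
            B * (n : ℝ) ^ (((r : ℝ) + ∑ j, (β j : ℝ)) / 2) := by

  classical
  choose B hB0 hB using fun j => aux_upper c hc (β j)
  set A : ℝ := ∏ _j : Fin r, (Real.exp (-(4 * c)) / 2) with hA
  have hA0 : 0 < A := Finset.prod_pos fun _ _ => by positivity
  have hlim : ∀ᶠ n : ℕ in Filter.atTop, Real.sqrt (4 * r) ≤ (n:ℝ) ^ γ :=
    ((tendsto_rpow_atTop hγ).comp tendsto_natCast_atTop_atTop).eventually_ge_atTop _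
  obtain ⟨N, hN⟩ := Filter.eventually_atTop.1 hlim
  refine ⟨A, max A (∏ j, B j), max N 4, hA0, le_max_left _ _, fun n hn x => ?_⟩
  have hn4 : (4:ℝ) ≤ n := by exact_mod_cast (le_max_right _ _).trans hn
  have hnN := hN n ((le_max_left _ _).trans hn)
  have hn0 : (0:ℝ) < n := by linarith
  set s := Real.sqrt n with hs
  have hs2 : 2 ≤ s := Real.le_sqrt_of_sq_le (by linarith)
  have hss : s ^ 2 = n := Real.sq_sqrt hn0.le
  have hpow : (n : ℝ) ^ (((r : ℝ) + ∑ j, (β j : ℝ)) / 2) = ∏ j, s ^ (β j + 1) := by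
    rw [Finset.prod_pow_eq_pow_sum, hs, Real.sqrt_eq_rpow, ← Real.rpow_mul_natCast hn0.le]
    congr 1
    push_cast [Finset.sum_add_distrib]
    simp
    ring
  let f : Fin r → ℤ → ℝ := fun j k =>
    |(k:ℝ) - n * x j| ^ β j * Real.exp (-(c * (((k:ℝ) - n * x j) / s) ^ 2))
  have hf0 : ∀ j k, 0 ≤ f j k := fun j k => by positivity
  have hfun : ∀ m : Fin r → ℤ, (∏ j, |(m j : ℝ) - n * x j| ^ β j) *
      Real.exp (-c * (∑ j, ((m j : ℝ) - n * x j) ^ 2) / n) = ∏ j, f j (m j) := by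
    intro m
    simp only [f]
    rw [Finset.prod_mul_distrib, ← Real.exp_sum]
    congr 2
    rw [Finset.mul_sum, Finset.sum_div]
    refine Finset.sum_congr rfl fun j _ => ?_
    rw [div_pow, hss]; ring
  simp only [hfun, hpow]
  set W := {m : Fin r → ℤ |
    Real.sqrt (∑ j, ((m j : ℝ) - n * x j) ^ 2) ≤ (n : ℝ) ^ ((1 : ℝ) / 2 + γ)} with hW
  set F : (Fin r → ℤ) → ℝ := fun m => ∏ j, f j (m j) with hF
  have hF0 : ∀ m, 0 ≤ F m := fun m => Finset.prod_nonneg fun j _ => hf0 _ _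
  have hG0 : ∀ m, 0 ≤ Set.indicator W F m := fun m => Set.indicator_nonneg (fun m _ => hF0 m) m
  have hP0 : 0 ≤ ∏ j, s ^ (β j + 1) := Finset.prod_nonneg fun j _ => by positivity
  have hup : ∀ S : Finset (Fin r → ℤ), ∑ m ∈ S, Set.indicator W F m ≤
      max A (∏ j, B j) * ∏ j, s ^ (β j + 1) := by
    intro S
    calc ∑ m ∈ S, Set.indicator W F m ≤ ∑ m ∈ S, F m :=
          Finset.sum_le_sum fun m _ => Set.indicator_le_self' (fun _ _ => hF0 _) m
      _ ≤ ∑ m ∈ Fintype.piFinset (fun j => S.image (fun m => m j)), F m := by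
          refine Finset.sum_le_sum_of_subset_of_nonneg ?_ (fun m _ _ => hF0 m)
          intro m hm
          rw [Fintype.mem_piFinset]
          exact fun j => Finset.mem_image_of_mem _ hm
      _ = ∏ j, ∑ k ∈ S.image (fun m => m j), f j k := by rw [Finset.prod_univ_sum]
      _ ≤ ∏ j, (B j * s ^ (β j + 1)) :=
          Finset.prod_le_prod (fun j _ => Finset.sum_nonneg fun k _ => hf0 j k)
            (fun j _ => hB j s (by linarith) _ _)
      _ = (∏ j, B j) * ∏ j, s ^ (β j + 1) := Finset.prod_mul_distrib
      _ ≤ _ := mul_le_mul_of_nonneg_right (le_max_right _ _) hP0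
  have hsum : Summable (Set.indicator W F) := summable_of_sum_le hG0 hup
  refine ⟨?_, hsum.tsum_le_of_sum_le hup⟩
  let t : Fin r → Finset ℤ := fun j => Finset.Ico ⌈n * x j + s⌉ ⌈n * x j + 2 * s⌉
  calc A * ∏ j, s ^ (β j + 1) = ∏ j, ((Real.exp (-(4 * c)) / 2) * s ^ (β j + 1)) := by
        rw [Finset.prod_mul_distrib]
    _ ≤ ∏ j, ∑ k ∈ t j, f j k :=
        Finset.prod_le_prod (fun j _ => by positivity)
          (fun j _ => aux_lower c hc (β j) s hs2 _)
    _ = ∑ m ∈ Fintype.piFinset t, F m := by rw [Finset.prod_univ_sum]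
    _ = ∑ m ∈ Fintype.piFinset t, Set.indicator W F m := by
        refine Finset.sum_congr rfl fun m hm => ?_
        rw [Set.indicator_of_mem]
        rw [Fintype.mem_piFinset] at hm
        have hle : ∑ j, ((m j : ℝ) - n * x j) ^ 2 ≤ (4 * r) * n := by
          calc ∑ j, ((m j : ℝ) - n * x j) ^ 2 ≤ ∑ _j : Fin r, 4 * (n:ℝ) := by
                refine Finset.sum_le_sum fun j _ => ?_
                have := hm j
                simp only [t] at this
                rw [Finset.mem_Ico, Int.ceil_le, Int.lt_ceil] at this
                have h1 : (m j : ℝ) - n * x j ≤ 2 * s := by linarith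
                have h2 : 0 ≤ (m j : ℝ) - n * x j := by linarith
                have h3 := pow_le_pow_left₀ h2 h1 2
                rw [mul_pow, hss] at h3
                linarith
            _ = _ := by simp; ring
        change Real.sqrt _ ≤ _
        calc Real.sqrt (∑ j, ((m j : ℝ) - n * x j) ^ 2) ≤ Real.sqrt ((4 * r) * n) :=
              Real.sqrt_le_sqrt hle
          _ = Real.sqrt n * Real.sqrt (4 * r) := by
              rw [Real.sqrt_mul (by positivity), mul_comm]
          _ ≤ Real.sqrt n * (n:ℝ) ^ γ := by gcongr
          _ = _ := by rw [Real.rpow_add hn0, Real.sqrt_eq_rpow]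
    _ ≤ _ := hsum.sum_le_tsum _ (fun m _ => hG0 m)
end

section
/- Let c > 0, a > 0, γ > 0 and b ∈ ℕ. Then lim_{n→∞} sup_{x ∈ ℝ} | n^{−(1+b)/2} · Σ_{j ∈ ℤ, |j − n x| ≤ a n^{1/2+γ}} |j − n x|^b · exp(−c (j − n x)² / n) − ∫_ℝ |y|^b e^{−c y²} dy | = 0. In other words, the one-dimensional Gaussian-polynomial lattice sum over the window of radius a n^{1/2+γ} equals n^{(1+b)/2} ( ∫_ℝ |y|^b e^{−c y²} dy + o(1) ), uniformly in the center x ∈ ℝ. (This is the one-dimensional comparison established in the proof of Lemma 2.4 of the paper.) -/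
open MeasureTheory Filter Topology in
lemma aux_floor (G : ℤ → ℝ) (hG : Integrable (fun u : ℝ => G ⌊u⌋)) :
    ∫ u : ℝ, G ⌊u⌋ = ∑' j : ℤ, G j := by
  have h := integral_iUnion (μ := volume) (s := fun n : ℤ => Set.Ico (n : ℝ) (n + 1))
    (f := fun u : ℝ => G ⌊u⌋) (fun i => measurableSet_Ico)
    (Set.pairwise_disjoint_Ico_intCast ℝ) hG.integrableOn
  rw [iUnion_Ico_intCast, setIntegral_univ] at h
  rw [h]
  congr 1
  ext j
  rw [setIntegral_congr_fun (g := fun _ => G j) measurableSet_Ico]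
  · simp
  · intro u hu
    have : ⌊u⌋ = j := Int.floor_eq_iff.2 hu
    simp [this]

noncomputable def auxG (c a γ : ℝ) (b n : ℕ) (t : ℝ) : ℤ → ℝ :=
  Set.indicator
    {j : ℤ | |(j : ℝ) - t| ≤ a * (n : ℝ) ^ ((1 : ℝ) / 2 + γ)}
    (fun j => |(j : ℝ) - t| ^ b * Real.exp (-c * ((j : ℝ) - t) ^ 2 / n))

noncomputable def auxP (n : ℕ) (t y : ℝ) : ℝ := (⌊√n * y + t⌋ - t) / √n

noncomputable def auxF (c : ℝ) (b : ℕ) (y : ℝ) : ℝ := |y| ^ b * Real.exp (-c * y ^ 2)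

lemma auxP_close (n : ℕ) (hn : 1 ≤ n) (t y : ℝ) : |auxP n t y - y| ≤ (√n)⁻¹ := by
  have hs : 0 < √(n : ℝ) := Real.sqrt_pos.2 (by exact_mod_cast hn)
  have : auxP n t y - y = (⌊√n * y + t⌋ - (√n * y + t)) * (√n)⁻¹ := by
    unfold auxP; field_simp; ring
  rw [this, abs_mul, abs_of_pos (inv_pos.2 hs)]
  have h1 := Int.floor_le (√n * y + t)
  have h2 := Int.lt_floor_add_one (√n * y + t)
  have : |(⌊√n * y + t⌋ : ℝ) - (√n * y + t)| ≤ 1 := by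
    rw [abs_le]; constructor <;> linarith
  exact mul_le_of_le_one_left (inv_pos.2 hs).le this

lemma auxG_eq (c a γ : ℝ) (b n : ℕ) (hn : 1 ≤ n) (t y : ℝ) :
    (√n ^ b)⁻¹ * auxG c a γ b n t ⌊√n * y + t⌋ =
      Set.indicator {y : ℝ | |(⌊√n * y + t⌋ : ℝ) - t| ≤ a * (n : ℝ) ^ ((1 : ℝ) / 2 + γ)}
        (fun y => auxF c b (auxP n t y)) y := by
  have hs : 0 < √(n : ℝ) := Real.sqrt_pos.2 (by exact_mod_cast hn)
  have hs2 : √(n : ℝ) ^ 2 = n := Real.sq_sqrt (by positivity)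
  unfold auxG
  by_cases h : |(⌊√n * y + t⌋ : ℝ) - t| ≤ a * (n : ℝ) ^ ((1 : ℝ) / 2 + γ)
  · rw [Set.indicator_of_mem (by exact h), Set.indicator_of_mem (by exact h)]
    unfold auxF auxP
    rw [abs_div, abs_of_pos hs, div_pow, div_pow, hs2, ← mul_assoc, mul_div_assoc]
    congr 1
    ring
  · rw [Set.indicator_of_notMem (by exact h), Set.indicator_of_notMem (by exact h), mul_zero]

noncomputable def auxB (c : ℝ) (b : ℕ) (y : ℝ) : ℝ :=
  (|y| + 1) ^ b * (Real.exp c * Real.exp (-(c / 2) * y ^ 2))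

lemma auxF_int (c : ℝ) (hc : 0 < c) (b : ℕ) :
    MeasureTheory.Integrable (fun y : ℝ => |y| ^ b * Real.exp (-c * y ^ 2)) := by
  have := (integrable_rpow_mul_exp_neg_mul_sq hc (s := b)
    (by have : (0 : ℝ) ≤ b := by positivity
        linarith)).norm
  refine this.congr (Filter.Eventually.of_forall fun y => ?_)
  simp [abs_mul, abs_pow]

lemma auxB_int (c : ℝ) (hc : 0 < c) (b : ℕ) : MeasureTheory.Integrable (auxB c b) := by
  have : auxB c b = fun y => ∑ m ∈ Finset.range (b + 1),
      ((b.choose m : ℝ) * Real.exp c) * (|y| ^ m * Real.exp (-(c / 2) * y ^ 2)) := by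
    ext y
    unfold auxB
    rw [add_pow, Finset.sum_mul]
    refine Finset.sum_congr rfl fun m _ => ?_
    simp only [one_pow]; ring
  rw [this]
  exact MeasureTheory.integrable_finsetSum _ fun m _ => (auxF_int (c / 2) (by positivity) m).const_mul _

lemma auxF_le (c : ℝ) (hc : 0 < c) (b : ℕ) (p y : ℝ) (h : |p - y| ≤ 1) :
    auxF c b p ≤ auxB c b y := by
  unfold auxF auxB
  rw [← Real.exp_add]
  have h1 : |p| ≤ |y| + 1 := by
    have := abs_sub_abs_le_abs_sub p y
    linarith
  have h2 : (p - y) ^ 2 ≤ 1 := by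
    rw [← sq_abs]; exact pow_le_one₀ (abs_nonneg _) h
  have h3 : -c * p ^ 2 ≤ c + -(c / 2) * y ^ 2 := by
    have : 0 ≤ p ^ 2 + 1 - y ^ 2 / 2 := by nlinarith [sq_nonneg (2 * p - y)]
    nlinarith [mul_nonneg hc.le this]
  gcongr

lemma auxF_nonneg (c : ℝ) (b : ℕ) (p : ℝ) : 0 ≤ auxF c b p := by
  unfold auxF; positivity

noncomputable def auxH (c a γ : ℝ) (b n : ℕ) (t y : ℝ) : ℝ :=
  (√n ^ b)⁻¹ * auxG c a γ b n t ⌊√n * y + t⌋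

lemma auxH_meas (c a γ : ℝ) (b n : ℕ) (t : ℝ) : Measurable (auxH c a γ b n t) := by
  unfold auxH
  have h : Measurable (auxG c a γ b n t) := measurable_from_top
  have h2 : Measurable (fun y : ℝ => ⌊√n * y + t⌋) :=
    Int.measurable_floor.comp (by fun_prop)
  exact (h.comp h2).const_mul _

lemma auxH_le (c a γ : ℝ) (hc : 0 < c) (b n : ℕ) (hn : 1 ≤ n) (t y : ℝ) :
    ‖auxH c a γ b n t y‖ ≤ auxB c b y := by
  have hs : 1 ≤ √(n : ℝ) := Real.one_le_sqrt.2 (by exact_mod_cast hn)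
  unfold auxH
  rw [auxG_eq c a γ b n hn]
  refine (norm_indicator_le_norm_self _ _).trans ?_
  rw [Real.norm_of_nonneg (auxF_nonneg _ _ _)]
  exact auxF_le c hc b _ _ ((auxP_close n hn t y).trans (inv_le_one_of_one_le₀ hs))

lemma auxH_int (c a γ : ℝ) (hc : 0 < c) (b n : ℕ) (hn : 1 ≤ n) (t : ℝ) :
    MeasureTheory.Integrable (auxH c a γ b n t) :=
  (auxB_int c hc b).mono' (auxH_meas c a γ b n t).aestronglyMeasurable
    (Filter.Eventually.of_forall (auxH_le c a γ hc b n hn t))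

lemma auxH_integral (c a γ : ℝ) (hc : 0 < c) (b n : ℕ) (hn : 1 ≤ n) (t : ℝ) :
    ∫ y, auxH c a γ b n t y =
      (n : ℝ) ^ (-((1 + (b : ℝ)) / 2)) * ∑' j, auxG c a γ b n t j := by
  have hs : 0 < √(n : ℝ) := Real.sqrt_pos.2 (by exact_mod_cast hn)
  have hi := auxH_int c a γ hc b n hn t
  have hG : MeasureTheory.Integrable (fun u : ℝ => auxG c a γ b n t ⌊u⌋) := by
    have h1 := ((hi.const_mul (√n ^ b)).comp_mul_left' (inv_ne_zero hs.ne')).comp_sub_right t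
    refine h1.congr (Filter.Eventually.of_forall fun u => ?_)
    have : √(n : ℝ) * ((√n)⁻¹ * (u - t)) + t = u := by field_simp; ring
    simp only [auxH, this]
    field_simp
  rw [← aux_floor _ hG]
  unfold auxH
  rw [MeasureTheory.integral_const_mul,
    MeasureTheory.Measure.integral_comp_mul_left (fun y => auxG c a γ b n t ⌊y + t⌋) √n,
    MeasureTheory.integral_add_right_eq_self (fun y => auxG c a γ b n t ⌊y⌋) t,
    smul_eq_mul, ← mul_assoc, abs_of_pos (inv_pos.2 hs)]
  congr 1
  rw [Real.rpow_neg (by positivity), ← mul_inv, ← pow_succ, Real.sqrt_eq_rpow,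
    ← Real.rpow_natCast, ← Real.rpow_mul (by positivity)]
  congr 2
  push_cast; ring

open Filter Topology in
lemma auxH_tendsto (c a γ : ℝ) (ha : 0 < a) (hγ : 0 < γ) (b : ℕ) (t : ℕ → ℝ) (y : ℝ) :
    Tendsto (fun n => auxH c a γ b n (t n) y) atTop (𝓝 (auxF c b y)) := by
  have hinv : Tendsto (fun n : ℕ => (√(n : ℝ))⁻¹) atTop (𝓝 0) :=
    tendsto_inv_atTop_zero.comp (Real.tendsto_sqrt_atTop.comp tendsto_natCast_atTop_atTop)
  have hP : Tendsto (fun n => auxP n (t n) y) atTop (𝓝 y) := by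
    rw [tendsto_iff_norm_sub_tendsto_zero]
    refine squeeze_zero' (Eventually.of_forall fun _ => norm_nonneg _) ?_ hinv
    filter_upwards [eventually_ge_atTop 1] with n hn
    exact auxP_close n hn _ y
  have hF : Continuous (auxF c b) := by unfold auxF; fun_prop
  refine ((hF.tendsto y).comp hP).congr' ?_
  have hw : Tendsto (fun n : ℕ => a * (n : ℝ) ^ γ) atTop atTop :=
    ((tendsto_rpow_atTop hγ).comp tendsto_natCast_atTop_atTop).const_mul_atTop ha
  filter_upwards [eventually_ge_atTop 1, hw.eventually_ge_atTop (|y| + 1)] with n hn hn2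
  unfold auxH
  rw [auxG_eq c a γ b n hn, Set.indicator_of_mem]
  · rfl
  have hs1 : 1 ≤ √(n : ℝ) := Real.one_le_sqrt.2 (by exact_mod_cast hn)
  have hs : 0 < √(n : ℝ) := by linarith
  have hn0 : (0 : ℝ) < n := by exact_mod_cast hn
  have h1 : |auxP n (t n) y| ≤ |y| + 1 := by
    have := abs_sub_abs_le_abs_sub (auxP n (t n) y) y
    have := auxP_close n hn (t n) y
    have := inv_le_one_of_one_le₀ hs1
    linarith
  unfold auxP at h1
  rw [abs_div, abs_of_pos hs, div_le_iff₀ hs] at h1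
  show |(⌊√n * y + t n⌋ : ℝ) - t n| ≤ a * (n : ℝ) ^ ((1 : ℝ) / 2 + γ)
  rw [Real.rpow_add hn0, ← Real.sqrt_eq_rpow]
  calc _ ≤ _ := h1
    _ ≤ (a * (n : ℝ) ^ γ) * √n := by gcongr
    _ = _ := by ring

open Filter Topology in
lemma aux_seq (c a γ : ℝ) (hc : 0 < c) (ha : 0 < a) (hγ : 0 < γ) (b : ℕ) (t : ℕ → ℝ) :
    Tendsto (fun n : ℕ => (n : ℝ) ^ (-((1 + (b : ℝ)) / 2)) * ∑' j, auxG c a γ b n (t n) j)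
      atTop (𝓝 (∫ y, auxF c b y)) := by
  have h : Tendsto (fun n : ℕ => ∫ y, auxH c a γ b n (t n) y) atTop (𝓝 (∫ y, auxF c b y)) := by
    refine MeasureTheory.tendsto_integral_filter_of_dominated_convergence (auxB c b) ?_ ?_
      (auxB_int c hc b) ?_
    · exact Eventually.of_forall fun n => (auxH_meas c a γ b n (t n)).aestronglyMeasurable
    · filter_upwards [eventually_ge_atTop 1] with n hn
      exact Eventually.of_forall (auxH_le c a γ hc b n hn (t n))
    · exact Eventually.of_forall (auxH_tendsto c a γ ha hγ b t)
  refine h.congr' ?_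
  filter_upwards [eventually_ge_atTop 1] with n hn
  exact auxH_integral c a γ hc b n hn (t n)

/-- One-dimensional comparison from the proof of Lemma 2.4: uniformly in the
center `x ∈ ℝ`, the normalized Gaussian-polynomial lattice sum over the window
`|j − n x| ≤ a n^{1/2+γ}` converges to `∫_ℝ |y|^b e^{−c y²} dy` as `n → ∞`. -/
theorem stmt_6 (c a γ : ℝ) (hc : 0 < c) (ha : 0 < a) (hγ : 0 < γ) (b : ℕ) :
    ∀ ε : ℝ, 0 < ε → ∃ N : ℕ, ∀ n : ℕ, N ≤ n → ∀ x : ℝ,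
      |(n : ℝ) ^ (-((1 + (b : ℝ)) / 2)) *
          (∑' j : ℤ,
            Set.indicator
              {j : ℤ | |(j : ℝ) - n * x| ≤ a * (n : ℝ) ^ ((1 : ℝ) / 2 + γ)}
              (fun j => |(j : ℝ) - n * x| ^ b * Real.exp (-c * ((j : ℝ) - n * x) ^ 2 / n)) j) -
          ∫ y : ℝ, |y| ^ b * Real.exp (-c * y ^ 2)| ≤ ε := by
  intro ε hε
  by_contra! hcon
  choose m hm x hx using hcon
  classical
  let P : ℕ → ℝ → Prop := fun n x => ε <
    |(n : ℝ) ^ (-((1 + (b : ℝ)) / 2)) * ∑' j, auxG c a γ b n (n * x) j - ∫ y, auxF c b y|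
  let X : ℕ → ℝ := fun n => if h : ∃ x, P n x then h.choose else 0
  have h := aux_seq c a γ hc ha hγ b (fun n => n * X n)
  obtain ⟨N, hN⟩ := Metric.tendsto_atTop.1 h ε hε
  have h1 := hN (m N) (hm N)
  have hex : ∃ x, P (m N) x := ⟨x N, hx N⟩
  have h2 : P (m N) (X (m N)) := by
    simp only [X, dif_pos hex]
    exact hex.choose_spec
  rw [Real.dist_eq] at h1
  exact lt_asymm h1 h2
end

section
/- Let U ⊆ ℝ^r be open, δ₀ ∈ U, and let ψ : U → ℝ be three times continuously differentiable with ∇ψ(δ₀) = 0 and with negative definite Hessian at δ₀. Let q > 0 and 0 < γ < 1/6. Then there exist constants 0 < A ≤ B and N ∈ ℕ such that for all n ≥ N: A · n^{r/2} · e^{n q ψ(δ₀)} ≤ Σ_{m ∈ ℤ^r, ‖m/n − δ₀‖ ≤ n^{−1/2+γ}} e^{n q ψ(m/n)} ≤ B · n^{r/2} · e^{n q ψ(δ₀)}. (This discrete Laplace-method asymptotic is established in the proof of Theorem 2.1 of the paper, with ψ(δ) = ⟨δ, s_p⟩ − φ(δ) and q = p, and yields ‖k_n‖_{ℓ^p}^p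 ≍ n^{−r(p−1)/2} ϱ^{np} e^{npψ(δ_p)} on the critical region.) -/
theorem qsum (b : ℝ) (hb : 0 < b) : Summable (fun j : ℤ => Real.exp (-b * (j:ℝ)^2)) := by
  have h : Summable (fun j : ℕ => Real.exp (-b * (j:ℝ)^2)) := by
    have h2 : Summable (fun j : ℕ => (Real.exp (-b))^j) :=
      summable_geometric_of_lt_one (Real.exp_pos _).le (by simpa using hb)
    refine Summable.of_nonneg_of_le (fun _ => (Real.exp_pos _).le) (fun j => ?_) h2
    rw [← Real.exp_nat_mul]
    apply Real.exp_le_exp.2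
    have : (j:ℝ) ≤ (j:ℝ)^2 := by exact_mod_cast Nat.le_self_pow two_ne_zero j
    nlinarith
  apply Summable.of_nat_of_neg
  · simpa using h
  · simpa using h

theorem oneD (b : ℝ) (hb : 0 < b) : ∃ K : ℝ, 0 < K ∧ ∀ (s a : ℝ), 1 ≤ s → ∀ F : Finset ℤ,
    ∑ k ∈ F, Real.exp (-b * (((k:ℝ) - a)/s)^2) ≤ K * s := by
  have hS := qsum (b/2) (by positivity)
  set T := ∑' j : ℤ, Real.exp (-(b/2) * (j:ℝ)^2) with hT
  have hT0 : 0 < T := hS.tsum_pos (fun _ => (Real.exp_pos _).le) 0 (Real.exp_pos _)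
  refine ⟨2 * Real.exp b * T, by positivity, fun s a hs F => ?_⟩
  have hs0 : 0 < s := by linarith
  set f : ℤ → ℤ := fun k => ⌊((k:ℝ) - a)/s⌋ with hf
  rw [← Finset.sum_fiberwise_of_maps_to (t := F.image f) (g := f) (fun i hi => Finset.mem_image_of_mem _ hi)]
  have key : ∀ j ∈ F.image f, ∑ k ∈ F with f k = j, Real.exp (-b * (((k:ℝ) - a)/s)^2) ≤ 2 * s * Real.exp b * Real.exp (-(b/2) * (j:ℝ)^2) := by
    intro j _
    have hcard : ((F.filter (fun k => f k = j)).card : ℝ) ≤ 2 * s := by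
      have hsub : F.filter (fun k => f k = j) ⊆ Finset.Icc ⌈a + j * s⌉ ⌊a + (j+1) * s⌋ := by
        intro k hk
        simp only [Finset.mem_filter, hf, Int.floor_eq_iff] at hk
        obtain ⟨_, h1, h2⟩ := hk
        rw [le_div_iff₀ hs0] at h1
        rw [div_lt_iff₀ hs0] at h2
        rw [Finset.mem_Icc, Int.ceil_le, Int.le_floor]
        constructor <;> linarith
      have h1 := Finset.card_le_card hsub
      rw [Int.card_Icc] at h1
      have h2 : ((⌊a + (j+1) * s⌋ + 1 - ⌈a + j * s⌉).toNat : ℝ) ≤ 2 * s := by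
        rw [← Int.cast_natCast, Int.toNat_eq_max]
        push_cast
        apply max_le _ (by positivity)
        have := Int.floor_le (a + (j+1) * s)
        have := Int.le_ceil (a + j * s)
        nlinarith
      exact le_trans (by exact_mod_cast h1) h2
    refine (Finset.sum_le_card_nsmul _ _ (Real.exp b * Real.exp (-(b/2) * (j:ℝ)^2)) ?_).trans ?_
    · intro k hk
      simp only [Finset.mem_filter, hf, Int.floor_eq_iff] at hk
      obtain ⟨_, h1, h2⟩ := hk
      rw [← Real.exp_add]
      apply Real.exp_le_exp.2
      set x := ((k:ℝ) - a)/s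
      have : (j:ℝ)^2 ≤ 2 * x^2 + 2 := by
        have : (x - j)^2 ≤ 1 := by nlinarith
        nlinarith [sq_nonneg (2 * x - j)]
      nlinarith
    · rw [nsmul_eq_mul, mul_assoc (2 * s)]
      gcongr
  refine (Finset.sum_le_sum key).trans ?_
  rw [← Finset.mul_sum]
  have := hS.sum_le_tsum (F.image f) (fun _ _ => (Real.exp_pos _).le)
  calc _ ≤ 2 * s * Real.exp b * T := by gcongr
    _ = _ := by ring

theorem locQuad (r : ℕ) (U : Set (Fin r → ℝ)) (hU : IsOpen U)
    (δ₀ : Fin r → ℝ) (hδ₀ : δ₀ ∈ U)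
    (ψ : (Fin r → ℝ) → ℝ) (hψ : ContDiffOn ℝ 3 ψ U)
    (hgrad : fderiv ℝ ψ δ₀ = 0)
    (hhess : ∀ u : Fin r → ℝ, u ≠ 0 → iteratedFDeriv ℝ 2 ψ δ₀ ![u, u] < 0) :
    ∃ c C ε : ℝ, 0 < c ∧ 0 < C ∧ 0 < ε ∧ ∀ x, ‖x - δ₀‖ < ε →
      -C * ‖x - δ₀‖^2 ≤ ψ x - ψ δ₀ ∧ ψ x - ψ δ₀ ≤ -c * ‖x - δ₀‖^2 := by
  have hat : ContDiffAt ℝ 3 ψ δ₀ := hψ.contDiffAt (hU.mem_nhds hδ₀)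
  set D := fderiv ℝ (fderiv ℝ ψ) δ₀ with hD
  have hDu : ∀ u, u ≠ 0 → D u u < 0 := by
    intro u hu
    have := hhess u hu
    rw [iteratedFDeriv_two_apply] at this
    simpa using this
  have hsymm : ∀ u v, D u v = D v u := by
    have : IsSymmSndFDerivAt ℝ ψ δ₀ := hat.isSymmSndFDerivAt (by simp; norm_num)
    exact fun u v => this u v
  -- coercivity
  have hco : ∃ c : ℝ, 0 < c ∧ ∀ u, D u u ≤ -c * ‖u‖^2 := by
    rcases isEmpty_or_nonempty (Fin r) with h | h
    · refine ⟨1, one_pos, fun u => ?_⟩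
      have : u = 0 := Subsingleton.elim _ _
      simp [this]
    · have hcpt : IsCompact (Metric.sphere (0 : Fin r → ℝ) 1) := isCompact_sphere _ _
      have hne : (Metric.sphere (0 : Fin r → ℝ) 1).Nonempty := NormedSpace.sphere_nonempty.2 zero_le_one
      obtain ⟨u0, hu0, hmax⟩ := hcpt.exists_isMaxOn hne (f := fun u => D u u) (by fun_prop)
      have hu0' : u0 ≠ 0 := by
        rintro rfl; simp at hu0
      refine ⟨-(D u0 u0), by linarith [hDu u0 hu0'], fun u => ?_⟩
      by_cases hu : u = 0
      · simp [hu]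
      have hn : 0 < ‖u‖ := norm_pos_iff.2 hu
      have h1 : D (‖u‖⁻¹ • u) (‖u‖⁻¹ • u) ≤ D u0 u0 := hmax (by
        simp [norm_smul, hn.ne'])
      simp only [map_smul, smul_apply, smul_eq_mul] at h1
      rw [← mul_assoc, ← mul_inv, inv_mul_le_iff₀ (by positivity)] at h1
      linarith
  obtain ⟨c, hc, hcoer⟩ := hco
  have hfd : HasFDerivAt (fderiv ℝ ψ) D δ₀ := by
    have : ContDiffAt ℝ 1 (fderiv ℝ ψ) δ₀ := hat.fderiv_right (by norm_num)
    exact (this.differentiableAt (by norm_num)).hasFDerivAt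
  have hlo := hfd.isLittleO.def (show 0 < c/4 by positivity)
  have hdiff : ∀ᶠ x in nhds δ₀, x ∈ U := hU.mem_nhds hδ₀
  obtain ⟨ε, hε, hball⟩ := Metric.eventually_nhds_iff_ball.1 (hlo.and hdiff)
  refine ⟨c/4, c/4 + ‖D‖, ε, by positivity, by positivity, hε, fun x hx => ?_⟩
  have hmain : ‖(ψ x - 1/2 * D (x - δ₀) (x - δ₀)) - (ψ δ₀ - 1/2 * D (δ₀ - δ₀) (δ₀ - δ₀))‖ ≤ (c/4 * ‖x - δ₀‖) * ‖x - δ₀‖ := by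
    have hsub : Metric.closedBall δ₀ ‖x - δ₀‖ ⊆ Metric.ball δ₀ ε := Metric.closedBall_subset_ball hx
    refine Convex.norm_image_sub_le_of_norm_hasFDerivWithin_le
      (f := fun y => ψ y - 1/2 * D (y - δ₀) (y - δ₀)) (f' := fun y => fderiv ℝ ψ y - D (y - δ₀))
      (s := Metric.closedBall δ₀ ‖x - δ₀‖) ?_ ?_ (convex_closedBall _ _) (by simp) (by simp [dist_eq_norm])
    · intro y hy
      apply HasFDerivAt.hasFDerivWithinAt
      have hyU := (hball y (hsub hy)).2
      have h1 : HasFDerivAt ψ (fderiv ℝ ψ y) y :=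
        ((hψ.contDiffAt (hU.mem_nhds hyU)).differentiableAt (by norm_num)).hasFDerivAt
      have h0 : HasFDerivAt (fun y => y - δ₀) (ContinuousLinearMap.id ℝ (Fin r → ℝ)) y :=
        (hasFDerivAt_id y).sub_const _
      have h2 := (D.hasFDerivAt.comp y h0).clm_apply h0
      refine HasFDerivAt.congr_fderiv (h1.sub (h2.const_mul (1/2))) ?_
      refine ContinuousLinearMap.ext fun v => ?_
      have h3 := hsymm v (y - δ₀)
      simp only [sub_apply, add_apply, smul_apply,
        ContinuousLinearMap.comp_apply, ContinuousLinearMap.flip_apply, Function.comp_apply,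
        ContinuousLinearMap.id_apply, smul_eq_mul]
      linarith
    · intro y hy
      have := (hball y (hsub hy)).1
      rw [hgrad, sub_zero] at this
      refine this.trans ?_
      rw [Metric.mem_closedBall, dist_eq_norm] at hy
      gcongr
  simp only [sub_self, map_zero, mul_zero, sub_zero, Real.norm_eq_abs, abs_le] at hmain
  have h1 := hcoer (x - δ₀)
  have h2 : |D (x - δ₀) (x - δ₀)| ≤ ‖D‖ * ‖x - δ₀‖ * ‖x - δ₀‖ := D.le_opNorm₂ _ _
  have h3 := (abs_le.1 h2).1
  have h4 : 0 ≤ ‖D‖ * ‖x - δ₀‖ * ‖x - δ₀‖ := by positivity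
  constructor <;> nlinarith [hmain.1, hmain.2]


/-- Discrete Laplace-method asymptotic from the proof of Theorem 2.1: if `ψ` is
`C³` near `δ₀` with `∇ψ(δ₀) = 0` and negative definite Hessian at `δ₀`, then for
`q > 0` and `0 < γ < 1/6`,
`Σ_{m ∈ ℤ^r, ‖m/n − δ₀‖ ≤ n^{−1/2+γ}} e^{n q ψ(m/n)} ≍ n^{r/2} e^{n q ψ(δ₀)}`. -/
theorem stmt_14 (r : ℕ) (U : Set (Fin r → ℝ)) (hU : IsOpen U)
    (δ₀ : Fin r → ℝ) (hδ₀ : δ₀ ∈ U)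
    (ψ : (Fin r → ℝ) → ℝ) (hψ : ContDiffOn ℝ 3 ψ U)
    (hgrad : fderiv ℝ ψ δ₀ = 0)
    (hhess : ∀ u : Fin r → ℝ, u ≠ 0 → iteratedFDeriv ℝ 2 ψ δ₀ ![u, u] < 0)
    (q : ℝ) (hq : 0 < q) (γ : ℝ) (hγ0 : 0 < γ) (hγ1 : γ < 1 / 6) :
    ∃ A B : ℝ, ∃ N : ℕ, 0 < A ∧ A ≤ B ∧
      ∀ n : ℕ, N ≤ n →
        A * (n : ℝ) ^ ((r : ℝ) / 2) * Real.exp (n * q * ψ δ₀) ≤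
            (∑' m : Fin r → ℤ,
              Set.indicator
                {m : Fin r → ℤ |
                  Real.sqrt (∑ j, ((m j : ℝ) / n - δ₀ j) ^ 2) ≤ (n : ℝ) ^ (-(1 : ℝ) / 2 + γ)}
                (fun m => Real.exp (n * q * ψ (fun j => (m j : ℝ) / n))) m) ∧
          (∑' m : Fin r → ℤ,
              Set.indicator
                {m : Fin r → ℤ |
                  Real.sqrt (∑ j, ((m j : ℝ) / n - δ₀ j) ^ 2) ≤ (n : ℝ) ^ (-(1 : ℝ) / 2 + γ)}
                (fun m => Real.exp (n * q * ψ (fun j => (m j : ℝ) / n))) m) ≤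
            B * (n : ℝ) ^ ((r : ℝ) / 2) * Real.exp (n * q * ψ δ₀) := by
  obtain ⟨c, C, ε, hc, hC, hε, hloc⟩ := locQuad r U hU δ₀ hδ₀ ψ hψ hgrad hhess
  obtain ⟨K, hK, hKs⟩ := oneD (q * c / (r + 1)) (by positivity)
  have e1 : ∀ᶠ n : ℕ in Filter.atTop, (n : ℝ) ^ (-(1 : ℝ) / 2 + γ) < ε := by
    have h := (tendsto_rpow_neg_atTop (show 0 < 1/2 - γ by linarith)).comp
      (tendsto_natCast_atTop_atTop (R := ℝ))
    have h2 := h.eventually (gt_mem_nhds hε)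
    filter_upwards [h2] with n hn
    have h3 : -(1 : ℝ) / 2 + γ = -(1/2 - γ) := by ring
    rw [h3]
    exact hn
  have e2 : ∀ᶠ n : ℕ in Filter.atTop, √(r : ℝ) ≤ (n : ℝ) ^ γ :=
    ((tendsto_rpow_atTop hγ0).comp (tendsto_natCast_atTop_atTop (R := ℝ))).eventually_ge_atTop _
  obtain ⟨N, hN⟩ := Filter.eventually_atTop.1 ((e1.and e2).and (Filter.eventually_ge_atTop 1))
  refine ⟨Real.exp (-(q * C * r)), max (Real.exp (-(q * C * r))) (K ^ r), N, Real.exp_pos _,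
    le_max_left _ _, fun n hn => ?_⟩
  obtain ⟨⟨hR, hr⟩, hn1⟩ := hN n hn
  set R := (n : ℝ) ^ (-(1 : ℝ) / 2 + γ) with hRdef
  have hn0 : (0 : ℝ) < n := by exact_mod_cast hn1
  have hn1' : (1 : ℝ) ≤ n := by exact_mod_cast hn1
  set s := √(n : ℝ) with hs
  have hs1 : 1 ≤ s := Real.one_le_sqrt.2 hn1'
  have hs0 : 0 < s := by linarith
  have hss : s ^ 2 = n := Real.sq_sqrt hn0.le
  have hpow : (n : ℝ) ^ ((r : ℝ) / 2) = s ^ r := by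
    rw [hs, Real.sqrt_eq_rpow, ← Real.rpow_natCast, ← Real.rpow_mul hn0.le]
    congr 1; ring
  have hRs : R = (n : ℝ) ^ γ / s := by
    rw [hRdef, hs, Real.sqrt_eq_rpow, ← Real.rpow_sub hn0]
    congr 1; ring
  rw [hpow]
  set W : Set (Fin r → ℤ) := {m : Fin r → ℤ | √(∑ j, ((m j : ℝ) / n - δ₀ j) ^ 2) ≤ R} with hW
  set f : (Fin r → ℤ) → ℝ := fun m => Real.exp (n * q * ψ (fun j => (m j : ℝ) / n)) with hf
  have hcoord : ∀ m ∈ W, ∀ j, |(m j : ℝ) / n - δ₀ j| ≤ R := by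
    intro m hm j
    refine le_trans ?_ hm
    apply Real.le_sqrt_of_sq_le
    rw [sq_abs]
    exact Finset.single_le_sum (f := fun j => ((m j : ℝ) / n - δ₀ j) ^ 2)
      (fun _ _ => sq_nonneg _) (Finset.mem_univ j)
  have hR0 : 0 ≤ R := by positivity
  have hnorm : ∀ m ∈ W, ‖(fun j => (m j : ℝ) / n) - δ₀‖ < ε := by
    intro m hm
    refine lt_of_le_of_lt ?_ hR
    rw [pi_norm_le_iff_of_nonneg hR0]
    intro j
    exact hcoord m hm j
  set P : Finset (Fin r → ℤ) := Fintype.piFinset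
    (fun j => Finset.Icc ⌈n * δ₀ j - n * R⌉ ⌊n * δ₀ j + n * R⌋) with hP
  have hWP : ∀ m ∈ W, m ∈ P := by
    intro m hm
    rw [hP, Fintype.mem_piFinset]
    intro j
    have h := abs_le.1 (hcoord m hm j)
    have h1 : (m j : ℝ) = n * ((m j : ℝ) / n) := by field_simp
    rw [Finset.mem_Icc, Int.ceil_le, Int.le_floor]
    constructor <;> nlinarith [h.1, h.2]
  have htsum : ∑' m, W.indicator f m = ∑ m ∈ P, W.indicator f m :=
    tsum_eq_sum (fun m hm => Set.indicator_of_notMem (fun h => hm (hWP m h)) _)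
  have hind0 : ∀ m, 0 ≤ W.indicator f m := fun m =>
    Set.indicator_nonneg (fun _ _ => (Real.exp_pos _).le) m
  rw [htsum]
  constructor
  · -- lower bound
    set Q : Finset (Fin r → ℤ) := Fintype.piFinset
      (fun j => Finset.Icc ⌈n * δ₀ j - s⌉ ⌊n * δ₀ j + s⌋) with hQ
    have hQc : ∀ m ∈ Q, ∀ j, |(m j : ℝ) / n - δ₀ j| ≤ 1 / s := by
      intro m hm j
      rw [hQ, Fintype.mem_piFinset] at hm
      have h := hm j
      rw [Finset.mem_Icc, Int.ceil_le, Int.le_floor] at h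
      have h1 : (m j : ℝ) / n - δ₀ j = (m j - n * δ₀ j) / n := by field_simp
      rw [h1, abs_div, abs_of_pos hn0, ← hss, div_le_div_iff₀ (by positivity) hs0, hss]
      have : |(m j : ℝ) - n * δ₀ j| ≤ s := abs_le.2 ⟨by linarith [h.1], by linarith [h.2]⟩
      nlinarith
    have hQW : ∀ m ∈ Q, m ∈ W := by
      intro m hm
      change √(∑ j, ((m j : ℝ) / n - δ₀ j) ^ 2) ≤ R
      have h1 : ∑ j, ((m j : ℝ) / n - δ₀ j) ^ 2 ≤ ∑ j : Fin r, (1 / s) ^ 2 := by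
        refine Finset.sum_le_sum fun j _ => ?_
        exact sq_le_sq' (abs_le.1 (hQc m hm j)).1 (abs_le.1 (hQc m hm j)).2
      refine (Real.sqrt_le_sqrt h1).trans ?_
      rw [Finset.sum_const, Finset.card_univ, Fintype.card_fin, nsmul_eq_mul,
        Real.sqrt_mul (by positivity), Real.sqrt_sq (by positivity), hRs, mul_one_div]
      gcongr
    have hterm : ∀ m ∈ Q, Real.exp (-(q * C * r)) * Real.exp (n * q * ψ δ₀) ≤ W.indicator f m := by
      intro m hm
      have hmW := hQW m hm
      rw [Set.indicator_of_mem hmW, hf, ← Real.exp_add]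
      apply Real.exp_le_exp.2
      have h1 := (hloc _ (hnorm m hmW)).1
      rcases Nat.eq_zero_or_pos r with h0 | hrpos
      · have : (fun j => (m j : ℝ) / n) = δ₀ := by
          subst h0; exact Subsingleton.elim _ _
        rw [this, h0]; simp
      have h2 : ‖(fun j => (m j : ℝ) / n) - δ₀‖ ≤ 1 / s := by
        rw [pi_norm_le_iff_of_nonneg (by positivity)]
        exact hQc m hm
      have h3 : n * ‖(fun j => (m j : ℝ) / n) - δ₀‖ ^ 2 ≤ 1 := by
        calc _ ≤ n * (1 / s) ^ 2 := by gcongr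
          _ = 1 := by rw [div_pow, hss]; field_simp
      have h4 : (1 : ℝ) ≤ r := by exact_mod_cast hrpos
      set t := ‖(fun j => (m j : ℝ) / n) - δ₀‖ ^ 2
      have h5 : n * q * (-C * t) ≤ n * q * (ψ (fun j => (m j : ℝ) / n) - ψ δ₀) := by gcongr
      have h6 : (q * C) * (n * t) ≤ (q * C) * r := by
        gcongr; linarith
      linarith
    have hcard : s ^ r ≤ (Q.card : ℝ) := by
      rw [hQ, Fintype.card_piFinset]
      push_cast
      have : s ^ r = ∏ _j : Fin r, s := by simp
      rw [this]
      refine Finset.prod_le_prod (fun _ _ => hs0.le) fun j _ => ?_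
      rw [Int.card_Icc]
      have h1 := Int.lt_floor_add_one (n * δ₀ j + s)
      have h2 := Int.ceil_lt_add_one (n * δ₀ j - s)
      have h3 : ((⌊n * δ₀ j + s⌋ + 1 - ⌈n * δ₀ j - s⌉ : ℤ) : ℝ) ≤
          (((⌊n * δ₀ j + s⌋ + 1 - ⌈n * δ₀ j - s⌉).toNat : ℤ) : ℝ) := by
        exact_mod_cast Int.self_le_toNat _
      push_cast at h3
      have h4 : s ≤ ⌊n * δ₀ j + s⌋ + 1 - ⌈n * δ₀ j - s⌉ := by linarith
      exact h4.trans (by exact_mod_cast h3)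
    calc _ = s ^ r * (Real.exp (-(q * C * r)) * Real.exp (n * q * ψ δ₀)) := by ring
      _ ≤ Q.card * (Real.exp (-(q * C * r)) * Real.exp (n * q * ψ δ₀)) := by gcongr
      _ = Q.card • (Real.exp (-(q * C * r)) * Real.exp (n * q * ψ δ₀)) := by rw [nsmul_eq_mul]
      _ ≤ ∑ m ∈ Q, W.indicator f m := Finset.card_nsmul_le_sum _ _ _ hterm
      _ ≤ _ := Finset.sum_le_sum_of_subset_of_nonneg (fun m hm => hWP m (hQW m hm))
          (fun m _ _ => hind0 m)
  · -- upper bound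
    have hterm : ∀ m ∈ P, W.indicator f m ≤ Real.exp (n * q * ψ δ₀) *
        ∏ j, Real.exp (-(q * c / (r + 1)) * (((m j : ℝ) - n * δ₀ j) / s) ^ 2) := by
      intro m _
      by_cases hmW : m ∈ W
      · rw [Set.indicator_of_mem hmW, hf, ← Real.exp_sum, ← Real.exp_add]
        apply Real.exp_le_exp.2
        have h1 := (hloc _ (hnorm m hmW)).2
        set u := (fun j => (m j : ℝ) / n) - δ₀ with hu
        have h2 : ∀ j, (((m j : ℝ) - n * δ₀ j) / s) ^ 2 = n * (u j) ^ 2 := by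
          intro j
          simp only [hu, Pi.sub_apply]
          rw [div_pow, hss]; field_simp
        have h3 : ∑ j, (u j) ^ 2 ≤ (r + 1) * ‖u‖ ^ 2 := by
          calc _ ≤ ∑ _j : Fin r, ‖u‖ ^ 2 := by
                refine Finset.sum_le_sum fun j _ => ?_
                have h := norm_le_pi_norm u j
                rw [← sq_abs, ← Real.norm_eq_abs]
                gcongr
            _ = r * ‖u‖ ^ 2 := by simp
            _ ≤ _ := by nlinarith [sq_nonneg ‖u‖]
        simp only [h2]
        rw [← Finset.mul_sum, ← Finset.mul_sum]
        have h4 : n * q * (ψ (fun j => (m j : ℝ) / n) - ψ δ₀) ≤ n * q * (-c * ‖u‖ ^ 2) := by gcongr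
        have h5 : (q * c / (r + 1)) * (n * ∑ j, (u j) ^ 2) ≤
            (q * c / (r + 1)) * (n * ((r + 1) * ‖u‖ ^ 2)) := by gcongr
        have h6 : (q * c / (r + 1)) * (n * ((r + 1) * ‖u‖ ^ 2)) = n * q * (c * ‖u‖ ^ 2) := by
          field_simp
        linarith
      · rw [Set.indicator_of_notMem hmW]; positivity
    refine (Finset.sum_le_sum hterm).trans ?_
    rw [← Finset.mul_sum, hP, ← Finset.prod_univ_sum
      (f := fun j (k : ℤ) => Real.exp (-(q * c / (r + 1)) * (((k : ℝ) - n * δ₀ j) / s) ^ 2))]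
    have hprod : ∏ j : Fin r, ∑ k ∈ Finset.Icc ⌈n * δ₀ j - n * R⌉ ⌊n * δ₀ j + n * R⌋,
        Real.exp (-(q * c / (r + 1)) * (((k : ℝ) - n * δ₀ j) / s) ^ 2) ≤ (K * s) ^ r := by
      have : (K * s) ^ r = ∏ _j : Fin r, (K * s) := by simp
      rw [this]
      exact Finset.prod_le_prod (fun _ _ => Finset.sum_nonneg fun _ _ => (Real.exp_pos _).le)
        fun j _ => hKs s _ hs1 _
    calc _ ≤ Real.exp (n * q * ψ δ₀) * (K * s) ^ r := by gcongr
      _ = K ^ r * s ^ r * Real.exp (n * q * ψ δ₀) := by rw [mul_pow]; ring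
      _ ≤ _ := by gcongr; exact le_max_right _ _
end

section
/- Let M ⊆ ℝ^r be a bounded convex set, ψ : M → ℝ a concave function, δ₀ ∈ M, and suppose there exist ε > 0 and c₀ > 0 such that ψ(δ) − ψ(δ₀) ≤ −c₀ ‖δ − δ₀‖² for every δ ∈ M with ‖δ − δ₀‖ ≤ ε. Then there exists c > 0 such that ψ(δ) − ψ(δ₀) ≤ −c ‖δ − δ₀‖² for every δ ∈ M. (This global quadratic decay estimate, equation (2.8) in the proof of Theorem 2.1 of the paper, upgrades the local quadratic bound at the concave maximum δ_p of ψ(δ) = ⟨δ, s_p⟩ − φ(δ) to all of the bounded convex set M.) -/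
/-- Equation (2.8) in the proof of Theorem 2.1: a local quadratic decay bound at
a point `δ₀` of a bounded convex set `M`, for a function `ψ` concave on `M`,
upgrades to a global quadratic decay bound on all of `M`. -/
theorem stmt_15 (r : ℕ) (M : Set (EuclideanSpace ℝ (Fin r)))
    (hM : Bornology.IsBounded M) (hconv : Convex ℝ M)
    (ψ : EuclideanSpace ℝ (Fin r) → ℝ) (hψ : ConcaveOn ℝ M ψ)
    (δ₀ : EuclideanSpace ℝ (Fin r)) (hδ₀ : δ₀ ∈ M)
    (ε c₀ : ℝ) (hε : 0 < ε) (hc₀ : 0 < c₀)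
    (hloc : ∀ δ ∈ M, ‖δ - δ₀‖ ≤ ε → ψ δ - ψ δ₀ ≤ -c₀ * ‖δ - δ₀‖ ^ 2) :
    ∃ c : ℝ, 0 < c ∧ ∀ δ ∈ M, ψ δ - ψ δ₀ ≤ -c * ‖δ - δ₀‖ ^ 2 := by
  obtain ⟨D, hD⟩ := hM.exists_norm_le
  have hD0 : 0 ≤ D := (norm_nonneg δ₀).trans (hD δ₀ hδ₀)
  obtain ⟨t, ht0, ht1, htD⟩ : ∃ t : ℝ, 0 < t ∧ t ≤ 1 ∧ t * (2 * D) ≤ ε := by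
    refine ⟨ε / (2 * D + ε), by positivity, ?_, ?_⟩
    · rw [div_le_one (by positivity)]; linarith
    · rw [div_mul_eq_mul_div, div_le_iff₀ (by positivity)]; nlinarith
  refine ⟨c₀ * t, by positivity, fun δ hδ => ?_⟩
  have hn : ‖δ - δ₀‖ ≤ 2 * D := by
    have := norm_sub_le δ δ₀
    have := hD δ hδ
    have := hD δ₀ hδ₀
    linarith
  have h1 := hconv hδ₀ hδ (sub_nonneg.2 ht1) ht0.le (by ring)
  have h2 := hψ.2 hδ₀ hδ (sub_nonneg.2 ht1) ht0.le (by ring)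
  have he : ((1 - t) • δ₀ + t • δ) - δ₀ = t • (δ - δ₀) := by module
  have hnorm : ‖((1 - t) • δ₀ + t • δ) - δ₀‖ = t * ‖δ - δ₀‖ := by
    rw [he, norm_smul, Real.norm_of_nonneg ht0.le]
  have h3 := hloc _ h1 (by
    rw [hnorm]; exact (mul_le_mul_of_nonneg_left hn ht0.le).trans htD)
  rw [hnorm] at h3
  simp only [smul_eq_mul] at h2
  refine le_of_mul_le_mul_left ?_ ht0
  nlinarith
end

section
/- Assume Σ_{v ∈ 𝒱} c_v v = 0 and that { v − v' : v, v' ∈ 𝒱 } spans V, let M be the interior of the convex hull of 𝒱, and define φ : M → ℝ by φ(δ) = sup_{x ∈ V} (⟨x, δ⟩ − log κ(x)). Then there exist constants 0 < c ≤ C such that c ‖δ‖² ≤ φ(δ) ≤ C ‖δ‖² for all δ ∈ M. (This is the two-sided quadratic comparison φ(δ) ≈ |δ|², equation (1.14) of the paper, for the rate function of the random walk.) -/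
open scoped RealInnerProductSpace

lemma aux_exp (t : ℝ) : Real.exp t ≤ t + Real.exp (t ^ 2) := by
  have h2 := Real.add_one_le_exp (t ^ 2)
  rcases le_total |t| 1 with h | h
  · have h1 := Real.abs_exp_sub_one_sub_id_le h
    have := (abs_le.1 h1).2
    linarith
  · rcases le_abs.1 h with h | h
    · have : Real.exp t ≤ Real.exp (t ^ 2) := Real.exp_le_exp.2 (by nlinarith)
      linarith
    · have : Real.exp t ≤ 1 := Real.exp_le_one_iff.2 (by linarith)
      nlinarith

lemma aux_beta {E : Type*} [NormedAddCommGroup E] [InnerProductSpace ℝ E] [FiniteDimensional ℝ E]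
    (S : Finset E) (c : E → ℝ) (hc : ∀ v ∈ S, 0 < c v)
    (hsum : ∑ v ∈ S, c v = 1) (hzero : ∑ v ∈ S, c v • v = 0)
    (hspan : Submodule.span ℝ (S : Set E) = ⊤) :
    ∃ B : ℝ, 0 < B ∧ ∀ δ : E, ∃ β : E → ℝ, ∑ v ∈ S, c v * β v = 0 ∧
      ∑ v ∈ S, (c v * β v) • v = δ ∧ ∀ v ∈ S, |β v| ≤ B * ‖δ‖ := by
  classical
  let T : (S → ℝ) →ₗ[ℝ] E := Fintype.linearCombination ℝ (fun v : S => (v : E))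
  have hT : LinearMap.range T = ⊤ := by
    rw [← hspan, Fintype.range_linearCombination]
    simp
  obtain ⟨g, hg⟩ := T.exists_rightInverse_of_surjective hT
  let a : E → E → ℝ := fun δ v => if h : v ∈ S then g δ ⟨v, h⟩ else 0
  let G : E →L[ℝ] (S → ℝ) := LinearMap.toContinuousLinearMap g
  have hGa : ∀ δ v, |a δ v| ≤ ‖G‖ * ‖δ‖ := by
    intro δ v
    by_cases h : v ∈ S
    · simp only [a, h, dif_pos]
      exact (norm_le_pi_norm (G δ) ⟨v, h⟩).trans (G.le_opNorm δ)
    · simp only [a, h, dif_neg, not_false_eq_true, abs_zero]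
      positivity
  have hsuma : ∀ δ, ∑ v ∈ S, a δ v • v = δ := by
    intro δ
    have h1 : T (g δ) = δ := by
      have := LinearMap.congr_fun hg δ
      simpa using this
    rw [← Finset.sum_coe_sort]
    conv_rhs => rw [← h1]
    simp [T, Fintype.linearCombination_apply, a]
  let D : ℝ := ∑ v ∈ S, (c v)⁻¹
  have hD : ∀ v ∈ S, (c v)⁻¹ ≤ D := fun v hv =>
    Finset.single_le_sum (f := fun v => (c v)⁻¹) (fun w hw => (inv_pos.2 (hc w hw)).le) hv
  have hD0 : 0 ≤ D := Finset.sum_nonneg (fun w hw => (inv_pos.2 (hc w hw)).le)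
  refine ⟨‖G‖ * D + S.card * ‖G‖ + 1, by positivity, fun δ => 
    ⟨fun v => a δ v * (c v)⁻¹ - ∑ w ∈ S, a δ w, ?_, ?_, ?_⟩⟩
  · have : ∀ v ∈ S, c v * (a δ v * (c v)⁻¹ - ∑ w ∈ S, a δ w) = a δ v - c v * ∑ w ∈ S, a δ w := by
      intro v hv
      have := (hc v hv).ne'
      field_simp
    rw [Finset.sum_congr rfl this, Finset.sum_sub_distrib, ← Finset.sum_mul, hsum]
    ring
  · have : ∀ v ∈ S, (c v * (a δ v * (c v)⁻¹ - ∑ w ∈ S, a δ w)) • v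
        = a δ v • v - (∑ w ∈ S, a δ w) • (c v • v) := by
      intro v hv
      have := (hc v hv).ne'
      rw [smul_smul, ← sub_smul]
      congr 1
      field_simp
    rw [Finset.sum_congr rfl this, Finset.sum_sub_distrib, ← Finset.smul_sum, hzero, hsuma]
    simp
  · intro v hv
    have h1 : |a δ v * (c v)⁻¹| ≤ ‖G‖ * ‖δ‖ * D := by
      rw [abs_mul, abs_of_pos (inv_pos.2 (hc v hv))]
      exact mul_le_mul (hGa δ v) (hD v hv) (inv_pos.2 (hc v hv)).le (by positivity)
    have h2 : |∑ w ∈ S, a δ w| ≤ S.card * (‖G‖ * ‖δ‖) := by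
      refine (Finset.abs_sum_le_sum_abs _ _).trans ?_
      refine (Finset.sum_le_card_nsmul _ _ _ (fun w _ => hGa δ w)).trans ?_
      simp
    have h3 := abs_sub (a δ v * (c v)⁻¹) (∑ w ∈ S, a δ w)
    have := norm_nonneg δ
    nlinarith

/-- Equation (1.14): the rate function `φ(δ) = sup_x (⟨x, δ⟩ − log κ(x))` of the
random walk satisfies the two-sided quadratic comparison `φ(δ) ≈ ‖δ‖²` on the
interior `M` of the convex hull of `𝒱`. -/
theorem stmt_17 (r : ℕ) (hr : 1 ≤ r)
    (𝒱 : Finset (EuclideanSpace ℝ (Fin r))) (h𝒱 : 𝒱.Nonempty)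
    (c : EuclideanSpace ℝ (Fin r) → ℝ) (hc : ∀ v ∈ 𝒱, 0 < c v)
    (hsum : ∑ v ∈ 𝒱, c v = 1)
    (κ : EuclideanSpace ℝ (Fin r) → ℝ)
    (hκ : ∀ x, κ x = ∑ v ∈ 𝒱, c v * Real.exp ⟪x, v⟫)
    (hzero : ∑ v ∈ 𝒱, c v • v = 0)
    (hspan : Submodule.span ℝ
        {d : EuclideanSpace ℝ (Fin r) | ∃ v ∈ 𝒱, ∃ v' ∈ 𝒱, d = v - v'} = ⊤)
    (M : Set (EuclideanSpace ℝ (Fin r)))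
    (hM : M = interior (convexHull ℝ (𝒱 : Set (EuclideanSpace ℝ (Fin r)))))
    (φ : EuclideanSpace ℝ (Fin r) → ℝ)
    (hφ : ∀ δ, φ δ = ⨆ x : EuclideanSpace ℝ (Fin r), (⟪x, δ⟫ - Real.log (κ x))) :
    ∃ cl CL : ℝ, 0 < cl ∧ cl ≤ CL ∧
      ∀ δ ∈ M, cl * ‖δ‖ ^ 2 ≤ φ δ ∧ φ δ ≤ CL * ‖δ‖ ^ 2 := by
  have hspan' : Submodule.span ℝ (𝒱 : Set (EuclideanSpace ℝ (Fin r))) = ⊤ := by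
    rw [eq_top_iff, ← hspan, Submodule.span_le]
    rintro d ⟨v, hv, w, hw, rfl⟩
    exact Submodule.sub_mem _ (Submodule.subset_span hv) (Submodule.subset_span hw)
  obtain ⟨B, hB, hβ⟩ := aux_beta 𝒱 c hc hsum hzero hspan'
  have hκpos : ∀ x, 0 < κ x := fun x => by
    rw [hκ]
    exact Finset.sum_pos (fun v hv => mul_pos (hc v hv) (Real.exp_pos _)) h𝒱
  have hc1 : ∀ v ∈ 𝒱, c v ≤ 1 := fun v hv => by
    rw [← hsum]
    exact Finset.single_le_sum (fun w hw => (hc w hw).le) hv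
  let L : ℝ := ∑ v ∈ 𝒱, -Real.log (c v)
  have hLv : ∀ v ∈ 𝒱, 0 ≤ -Real.log (c v) := fun v hv => by
    have := Real.log_nonpos (hc v hv).le (hc1 v hv)
    linarith
  have hL0 : 0 ≤ L := Finset.sum_nonneg hLv
  have hL : ∀ v ∈ 𝒱, -Real.log (c v) ≤ L := fun v hv => Finset.single_le_sum hLv hv
  -- crude bound
  have hcrude : ∀ x, ∀ δ ∈ M, ⟪x, δ⟫ - Real.log (κ x) ≤ L := by
    intro x δ hδ
    rw [hM] at hδ
    have hδ' := interior_subset hδ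
    have hconv : Convex ℝ {y : EuclideanSpace ℝ (Fin r) | ⟪x, y⟫ ≤ L + Real.log (κ x)} :=
      convex_halfSpace_le (innerₛₗ ℝ x).isLinear _
    have hsub : (𝒱 : Set (EuclideanSpace ℝ (Fin r))) ⊆ {y | ⟪x, y⟫ ≤ L + Real.log (κ x)} := by
      intro v hv
      have hv : v ∈ 𝒱 := hv
      have h1 : c v * Real.exp ⟪x, v⟫ ≤ κ x := by
        rw [hκ]
        exact Finset.single_le_sum (f := fun v => c v * Real.exp ⟪x, v⟫)
          (fun w hw => (mul_pos (hc w hw) (Real.exp_pos _)).le) hv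
      have h2 := Real.log_le_log (mul_pos (hc v hv) (Real.exp_pos _)) h1
      rw [Real.log_mul (hc v hv).ne' (Real.exp_pos _).ne', Real.log_exp] at h2
      have := hL v hv
      simp only [Set.mem_setOf_eq]
      linarith
    have := convexHull_min hsub hconv hδ'
    simp only [Set.mem_setOf_eq] at this
    linarith
  -- bound for small points
  have hsmall : ∀ x δ, B * ‖δ‖ ≤ 1 → ⟪x, δ⟫ - Real.log (κ x) ≤ B ^ 2 * ‖δ‖ ^ 2 := by
    intro x δ hδ
    obtain ⟨β, h0, h1, h2⟩ := hβ δ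
    have hp : ∀ v ∈ 𝒱, 0 ≤ c v * (1 + β v) := fun v hv => by
      have := (abs_le.1 ((h2 v hv).trans hδ)).1
      exact mul_nonneg (hc v hv).le (by linarith)
    have hp1 : ∑ v ∈ 𝒱, c v * (1 + β v) = 1 := by
      simp only [mul_add, mul_one, Finset.sum_add_distrib, h0, hsum, add_zero]
    have hJ := convexOn_exp.map_sum_le (t := 𝒱) (w := fun v => c v * (1 + β v))
      (p := fun v => ⟪x, v⟫ - β v) hp hp1 (fun _ _ => Set.mem_univ _)
    simp only [smul_eq_mul] at hJ
    have hle : ∑ v ∈ 𝒱, c v * (1 + β v) * Real.exp (⟪x, v⟫ - β v) ≤ κ x := by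
      rw [hκ]
      refine Finset.sum_le_sum fun v hv => ?_
      rw [mul_assoc, Real.exp_sub, ← mul_div_assoc]
      refine mul_le_mul_of_nonneg_left ?_ (hc v hv).le
      rw [div_le_iff₀ (Real.exp_pos _), mul_comm]
      exact mul_le_mul_of_nonneg_left (by linarith [Real.add_one_le_exp (β v)]) (Real.exp_pos _).le
    have hlog := (Real.le_log_iff_exp_le (hκpos x)).2 (hJ.trans hle)
    have hxδ : ⟪x, δ⟫ = ∑ v ∈ 𝒱, c v * β v * ⟪x, v⟫ := by
      conv_lhs => rw [← h1]
      simp [inner_sum, inner_smul_right]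
    have hx0 : (0 : ℝ) = ∑ v ∈ 𝒱, c v * ⟪x, v⟫ := by
      have : ⟪x, ∑ v ∈ 𝒱, c v • v⟫ = 0 := by rw [hzero, inner_zero_right]
      rw [← this]
      simp [inner_sum, inner_smul_right]
    have hexp : ∑ v ∈ 𝒱, c v * (1 + β v) * (⟪x, v⟫ - β v)
        = ⟪x, δ⟫ - ∑ v ∈ 𝒱, c v * β v ^ 2 := by
      have : ∑ v ∈ 𝒱, c v * (1 + β v) * (⟪x, v⟫ - β v) = ∑ v ∈ 𝒱, c v * ⟪x, v⟫
          + ∑ v ∈ 𝒱, c v * β v * ⟪x, v⟫ - ∑ v ∈ 𝒱, c v * β v - ∑ v ∈ 𝒱, c v * β v ^ 2 := by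
        rw [← Finset.sum_add_distrib, ← Finset.sum_sub_distrib, ← Finset.sum_sub_distrib]
        exact Finset.sum_congr rfl fun v _ => by ring
      rw [this, ← hx0, ← hxδ, h0]
      ring
    have hsq : ∑ v ∈ 𝒱, c v * β v ^ 2 ≤ B ^ 2 * ‖δ‖ ^ 2 := by
      calc ∑ v ∈ 𝒱, c v * β v ^ 2 ≤ ∑ v ∈ 𝒱, c v * (B * ‖δ‖) ^ 2 := by
            refine Finset.sum_le_sum fun v hv => ?_
            refine mul_le_mul_of_nonneg_left ?_ (hc v hv).le
            rw [← sq_abs]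
            exact pow_le_pow_left₀ (abs_nonneg _) (h2 v hv) 2
        _ = B ^ 2 * ‖δ‖ ^ 2 := by rw [← Finset.sum_mul, hsum]; ring
    linarith
  -- subgaussian bound
  let K : ℝ := 1 + ∑ v ∈ 𝒱, ‖v‖ ^ 2
  have hKv : ∀ v ∈ 𝒱, ‖v‖ ^ 2 ≤ K := fun v hv => by
    have := Finset.single_le_sum (f := fun v => ‖v‖ ^ 2) (fun w _ => sq_nonneg ‖w‖) hv
    simp only [K]
    linarith
  have hK : 0 < K := by
    have : 0 ≤ ∑ v ∈ 𝒱, ‖v‖ ^ 2 := Finset.sum_nonneg fun _ _ => sq_nonneg _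
    simp only [K]
    linarith
  have hsub : ∀ x, Real.log (κ x) ≤ K * ‖x‖ ^ 2 := by
    intro x
    rw [Real.log_le_iff_le_exp (hκpos x), hκ]
    have hx0 : ∑ v ∈ 𝒱, c v * ⟪x, v⟫ = (0 : ℝ) := by
      have : ⟪x, ∑ v ∈ 𝒱, c v • v⟫ = 0 := by rw [hzero, inner_zero_right]
      rw [← this]
      simp [inner_sum, inner_smul_right]
    calc ∑ v ∈ 𝒱, c v * Real.exp ⟪x, v⟫
        ≤ ∑ v ∈ 𝒱, (c v * ⟪x, v⟫ + c v * Real.exp (K * ‖x‖ ^ 2)) := by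
          refine Finset.sum_le_sum fun v hv => ?_
          rw [← mul_add]
          refine mul_le_mul_of_nonneg_left ?_ (hc v hv).le
          have h1 : ⟪x, v⟫ ^ 2 ≤ K * ‖x‖ ^ 2 := by
            have h2 : ⟪x, v⟫ ^ 2 ≤ (‖x‖ * ‖v‖) ^ 2 := by
              rw [← sq_abs]
              exact pow_le_pow_left₀ (abs_nonneg _) (abs_real_inner_le_norm x v) 2
            have h3 := mul_le_mul_of_nonneg_right (hKv v hv) (sq_nonneg ‖x‖)
            nlinarith
          have := Real.exp_le_exp.2 h1
          linarith [aux_exp ⟪x, v⟫]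
      _ = Real.exp (K * ‖x‖ ^ 2) := by
          rw [Finset.sum_add_distrib, hx0, ← Finset.sum_mul, hsum]
          ring
  refine ⟨1 / (4 * K), B ^ 2 + L * B ^ 2 + 1 / (4 * K), by positivity, ?_, ?_⟩
  · have : 0 ≤ B ^ 2 + L * B ^ 2 := by positivity
    linarith
  intro δ hδ
  constructor
  · rw [hφ]
    refine le_trans ?_ (le_ciSup (f := fun x => ⟪x, δ⟫ - Real.log (κ x))
      ⟨L, by rintro _ ⟨x, rfl⟩; exact hcrude x δ hδ⟩ ((1 / (2 * K)) • δ))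
    have h1 := hsub ((1 / (2 * K)) • δ)
    rw [norm_smul, mul_pow, Real.norm_eq_abs, sq_abs] at h1
    simp only [real_inner_smul_left, real_inner_self_eq_norm_sq]
    have h2 : 1 / (4 * K) * ‖δ‖ ^ 2
        = 1 / (2 * K) * ‖δ‖ ^ 2 - K * ((1 / (2 * K)) ^ 2 * ‖δ‖ ^ 2) := by
      field_simp
      ring
    linarith
  · rw [hφ]
    refine ciSup_le fun x => ?_
    have hp1 : 0 ≤ L * B ^ 2 * ‖δ‖ ^ 2 := by positivity
    have hp2 : 0 ≤ 1 / (4 * K) * ‖δ‖ ^ 2 := by positivity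
    have hp3 : 0 ≤ B ^ 2 * ‖δ‖ ^ 2 := by positivity
    rcases le_total (B * ‖δ‖) 1 with h | h
    · have := hsmall x δ h
      linarith
    · have h1 := hcrude x δ hδ
      have h2 : 1 ≤ (B * ‖δ‖) ^ 2 := one_le_pow₀ h
      have h3 := mul_le_mul_of_nonneg_left h2 hL0
      rw [mul_pow] at h3
      linarith
end
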